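/- Let a, b, c be integers with a ≠ 0, c ≠ 0 and a·c + b even. Then the following reciprocity formula holds: Σ_{n=0}^{|c|−1} exp(−(iπ/c)(a n² + b n)) = √(|c/a|) · exp(−(iπ/(4ac))(|ac| − b²)) · Σ_{n=0}^{|a|−1} exp((iπ/a)(c n² + b n)). -/

import Mathlib

open Complex Finset

/-!
Near a rational cusp, the theta function `θ(z, τ) = ∑ exp(2πinz + πin²τ)` sees the Gauss sum:
translating `τ` by `a/c` and `z` by `b/(2c)` multiplies the summand by `exp(πi(an² + bn)/c)`, which
is `|c|`-periodic in `n` because `ac + b` is even. Splitting `n` into residue classes modulo `|c|`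
and inverting each of the resulting theta series gives, as `τ → 0` with `Im(-1/τ) → ∞`,
`√(-iτ) · exp(πis²τ) · θ(sτ + b/(2c), τ + a/c) → (1/|c|) ∑ exp(πi(an² + bn)/c)`.
Inversion `τ ↦ -1/τ` sends the cusp `-a/c` to `c/a`, so the functional equation of `θ` equates, up
to an explicit factor, the limit at `-a/c` with the limit at `c/a`, and this is the reciprocity
formula.
-/

open Filter Topology
open scoped Real

lemma mul_cpow_of_re_pos_of_re_nonneg {x y : ℂ} (hx : 0 < x.re) (hy : 0 ≤ y.re) (hy₀ : y ≠ 0)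
    (s : ℂ) : (x * y) ^ s = x ^ s * y ^ s := by
  have hx₀ : x ≠ 0 := fun h ↦ by simp [h] at hx
  have harg_x := abs_lt.mp (abs_arg_lt_pi_div_two_iff.mpr (.inl hx))
  have harg_y := abs_le.mp (abs_arg_le_pi_div_two_iff.mpr hy)
  have hlog : log (x * y) = log x + log y :=
    log_mul hx₀ hy₀ ⟨by linarith [harg_x.1, harg_y.1], by linarith [harg_x.2, harg_y.2]⟩
  rw [cpow_def_of_ne_zero (mul_ne_zero hx₀ hy₀), cpow_def_of_ne_zero hx₀,
    cpow_def_of_ne_zero hy₀, hlog, add_mul, exp_add]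

lemma ofReal_cpow_half {x : ℝ} (hx : 0 ≤ x) : (x : ℂ) ^ (1 / 2 : ℂ) = √x := by
  rw [Real.sqrt_eq_rpow, ofReal_cpow hx]
  norm_num

lemma I_mul_ofReal_cpow_half {x : ℝ} (hx : x ≠ 0) :
    (I * x) ^ (1 / 2 : ℂ) = √|x| * cexp (π * I / 4 * (|x| / x : ℝ)) := by
  have hunit : (I * (|x| / x : ℝ)) ^ (1 / 2 : ℂ) = cexp (π * I / 4 * (|x| / x : ℝ)) := by
    rcases hx.lt_or_gt with hneg | hpos
    · rw [abs_of_neg hneg, neg_div, div_self hx, ofReal_neg, ofReal_one, mul_neg_one,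
        cpow_def_of_ne_zero (by simp), log_neg_I]
      congr 1
      ring
    · rw [abs_of_pos hpos, div_self hx, ofReal_one, mul_one, cpow_def_of_ne_zero I_ne_zero, log_I]
      congr 1
      ring
  have hfactor : I * x = (|x| : ℝ) * (I * (|x| / x : ℝ)) := by
    have hsq : (|x| : ℝ) * (|x| / x) = x := by rw [← mul_div_assoc, abs_mul_abs_self]; field_simp
    rw [mul_left_comm, ← ofReal_mul, hsq]
  rw [hfactor, mul_cpow_of_re_pos_of_re_nonneg (by simpa using hx) (by simp) (by simpa using hx),
    ofReal_cpow_half (abs_nonneg x), hunit]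

lemma abs_div_I_mul_ofReal_cpow_half {x : ℝ} (hx : x ≠ 0) :
    |x| / (I * x) ^ (1 / 2 : ℂ) = √|x| * cexp (-(π * I / 4) * (|x| / x : ℝ)) := by
  have hsqrt : (√|x| : ℂ) ≠ 0 := mod_cast (Real.sqrt_pos.mpr (abs_pos.mpr hx)).ne'
  have habs : ((|x| : ℝ) : ℂ) = √|x| * √|x| := mod_cast (Real.mul_self_sqrt (abs_nonneg x)).symm
  rw [I_mul_ofReal_cpow_half hx, habs, mul_div_mul_left _ _ hsqrt, neg_mul, exp_neg, div_eq_mul_inv]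

lemma abs_div_div_div_eq_abs_mul_div_mul (x y : ℝ) : |x / y| / (x / y) = |y * x| / (y * x) := by
  rcases eq_or_ne y 0 with rfl | hy
  · simp
  have hsq : |y| * |y| = y * y := abs_mul_abs_self y
  have hy' : |y| ≠ 0 := abs_ne_zero.mpr hy
  rw [abs_div, abs_mul]
  field_simp
  linear_combination -(|x| / x) * hsq

lemma ne_ofReal_of_im_pos {τ : ℂ} (hτ : 0 < τ.im) (x : ℝ) : τ ≠ x :=
  fun h ↦ by simp [h] at hτ

lemma im_neg_one_div_pos_iff {τ : ℂ} : 0 < (-1 / τ).im ↔ 0 < τ.im := by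
  rcases eq_or_ne τ 0 with rfl | hτ
  · simp
  · have hnorm : 0 < normSq τ := normSq_pos.mpr hτ
    rw [neg_div, one_div, neg_im, inv_im, neg_div, neg_neg, div_pos_iff_of_pos_right hnorm]

lemma tsum_int_eq_sum_range_tsum {R : Type*} [AddCommGroup R] [UniformSpace R]
    [IsUniformAddGroup R] [CompleteSpace R] [T0Space R] {f : ℤ → R} (hf : Summable f)
    (N : ℕ) [NeZero N] :
    ∑' n : ℤ, f n = ∑ r ∈ range N, ∑' m : ℤ, f (m * N + r) := by
  let e : Fin N × ℤ ≃ ℤ := (Equiv.prodComm (Fin N) ℤ).trans (Int.divModEquiv N).symm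
  have hfe : Summable fun p ↦ f (e p) := e.summable_iff.mpr hf
  rw [← e.tsum_eq f, hfe.tsum_prod, tsum_fintype,
    sum_range fun r ↦ ∑' m : ℤ, f (m * N + r)]
  rfl

lemma exists_norm_le_of_periodic {E : Type*} [SeminormedAddCommGroup E] {h : ℤ → E} {N : ℕ}
    [NeZero N] (hper : Function.Periodic h N) : ∃ C, ∀ n, ‖h n‖ ≤ C := by
  have hN : (0 : ℤ) < N := mod_cast NeZero.pos N
  refine ⟨∑ r ∈ Ico (0 : ℤ) N, ‖h r‖, fun n ↦ ?_⟩
  obtain ⟨r, hr, hnr⟩ := hper.exists_mem_Ico₀ hN n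
  rw [hnr]
  exact single_le_sum (f := fun r ↦ ‖h r‖) (fun r _ ↦ norm_nonneg _) (mem_Ico.mpr hr)

lemma tendsto_jacobiTheta₂_comap_im_atTop (z : ℂ) :
    Tendsto (jacobiTheta₂ z) (comap im atTop) (𝓝 1) := by
  have him : Tendsto im (comap im atTop) atTop := tendsto_comap
  have hterm (n : ℤ) : Tendsto (jacobiTheta₂_term n z) (comap im atTop)
      (𝓝 (if n = 0 then 1 else 0)) := by
    split_ifs with hn
    · have hone : jacobiTheta₂_term n z = fun _ ↦ 1 := by
        ext τ
        simp [hn, jacobiTheta₂_term]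
      exact hone ▸ tendsto_const_nhds
    · rw [tendsto_zero_iff_norm_tendsto_zero]
      simp_rw [norm_jacobiTheta₂_term]
      have hcoeff : -π * (n : ℝ) ^ 2 < 0 :=
        mul_neg_of_neg_of_pos (neg_neg_of_pos Real.pi_pos) (by positivity)
      exact Real.tendsto_exp_atBot.comp
        (tendsto_atBot_add_const_right _ _ (him.const_mul_atTop_of_neg hcoeff))
  have hbound : Summable fun n : ℤ ↦ Real.exp (-π * (1 * n ^ 2 - 2 * |z.im| * |n|)) := by
    simpa only [pow_zero, one_mul] using
      summable_pow_mul_jacobiTheta₂_term_bound |z.im| zero_lt_one 0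
  have hlim := tendsto_tsum_of_dominated_convergence hbound hterm <| by
    filter_upwards [him.eventually_ge_atTop 1] with τ hτ n
    exact norm_jacobiTheta₂_term_le zero_lt_one le_rfl hτ n
  rwa [tsum_ite_eq] at hlim

lemma jacobiTheta₂_term_mul_add (N r m : ℤ) (z τ : ℂ) :
    jacobiTheta₂_term (m * N + r) z τ =
      jacobiTheta₂_term r z τ * jacobiTheta₂_term m (N * (z + r * τ)) (N ^ 2 * τ) := by
  simp only [jacobiTheta₂_term, ← exp_add]
  congr 1
  push_cast
  ring

lemma jacobiTheta₂_term_mul_jacobiTheta₂ (N r : ℕ) [NeZero N] (z : ℂ) {τ : ℂ} (hτ : 0 < τ.im) :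
    jacobiTheta₂_term r z τ * jacobiTheta₂ (N * (z + r * τ)) (N ^ 2 * τ) =
      1 / (-I * τ) ^ (1 / 2 : ℂ) * cexp (-π * I * z ^ 2 / τ) *
        (1 / N * jacobiTheta₂ ((r + z / τ) / N) (-1 / (N ^ 2 * τ))) := by
  have hτ₀ : τ ≠ 0 := ne_ofReal_of_im_pos hτ 0
  have hN : (N : ℂ) ≠ 0 := NeZero.ne _
  have hsqrt : (-I * (N ^ 2 * τ)) ^ (1 / 2 : ℂ) = N * (-I * τ) ^ (1 / 2 : ℂ) := by
    have hN_re : 0 < (N : ℂ).re := by simpa using NeZero.pos N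
    have hN_sq_re : 0 < ((N : ℂ) ^ 2).re := by
      rw [← Nat.cast_pow, natCast_re]
      have := NeZero.pos N
      positivity
    rw [mul_left_comm, mul_cpow_of_re_pos_of_re_nonneg hN_sq_re (by simpa using hτ.le)
      (by simp [hτ₀]), one_div, sq_cpow_two_inv hN_re]
  have hexp : jacobiTheta₂_term r z τ * cexp (-π * I * (N * (z + r * τ)) ^ 2 / (N ^ 2 * τ)) =
      cexp (-π * I * z ^ 2 / τ) := by
    rw [jacobiTheta₂_term, ← exp_add]
    congr 1
    push_cast
    field_simp
    ring
  have harg : N * (z + r * τ) / (N ^ 2 * τ) = (r + z / τ) / N := by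
    field_simp
    ring
  rw [jacobiTheta₂_functional_equation, hsqrt, harg, ← hexp]
  ring

lemma tsum_periodic_mul_jacobiTheta₂_term {h : ℤ → ℂ} {N : ℕ} [NeZero N]
    (hper : Function.Periodic h N) (z : ℂ) {τ : ℂ} (hτ : 0 < τ.im) :
    ∑' n, h n * jacobiTheta₂_term n z τ =
      1 / (-I * τ) ^ (1 / 2 : ℂ) * cexp (-π * I * z ^ 2 / τ) *
        (1 / N * ∑ r ∈ range N, h r * jacobiTheta₂ ((r + z / τ) / N) (-1 / (N ^ 2 * τ))) := by
  have hsum : Summable fun n ↦ h n * jacobiTheta₂_term n z τ := by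
    obtain ⟨C, hC⟩ := exists_norm_le_of_periodic hper
    refine .of_norm_bounded (((summable_jacobiTheta₂_term_iff z τ).mpr hτ).norm.mul_left C)
      fun n ↦ ?_
    rw [norm_mul]
    gcongr
    exact hC n
  have hclass (r : ℕ) : ∑' m : ℤ, h (m * N + r) * jacobiTheta₂_term (m * N + r) z τ =
      h r * (jacobiTheta₂_term r z τ * jacobiTheta₂ (N * (z + r * τ)) (N ^ 2 * τ)) := by
    have hh (m : ℤ) : h (m * N + r) = h r := by rw [add_comm]; exact hper.int_mul m r
    simp_rw [hh, jacobiTheta₂_term_mul_add, tsum_mul_left]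
    rfl
  rw [tsum_int_eq_sum_range_tsum hsum N]
  simp_rw [hclass, jacobiTheta₂_term_mul_jacobiTheta₂ N _ z hτ, mul_sum]
  refine sum_congr rfl fun r _ ↦ ?_
  ring

lemma tendsto_tsum_periodic_mul_jacobiTheta₂_term {h : ℤ → ℂ} {N : ℕ} [NeZero N]
    (hper : Function.Periodic h N) (s : ℂ) {α : Type*} {l : Filter α} {τ : α → ℂ}
    (hτ : Tendsto (fun x ↦ (-1 / τ x).im) l atTop) :
    Tendsto (fun x ↦ (-I * τ x) ^ (1 / 2 : ℂ) * cexp (π * I * s ^ 2 * τ x) *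
      ∑' n, h n * jacobiTheta₂_term n (s * τ x) (τ x)) l (𝓝 (1 / N * ∑ r ∈ range N, h r)) := by
  have hscaled : Tendsto (fun x ↦ -1 / (N ^ 2 * τ x)) l (comap im atTop) := by
    have him (x : α) : (-1 / (N ^ 2 * τ x)).im = ((N : ℝ) ^ 2)⁻¹ * (-1 / τ x).im := by
      rw [← im_ofReal_mul]
      congr 1
      push_cast
      ring
    have hN : 0 < ((N : ℝ) ^ 2)⁻¹ := by have := NeZero.pos N; positivity
    rw [tendsto_comap_iff]
    simpa only [Function.comp_def, him] using hτ.const_mul_atTop hN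
  have hlim := (tendsto_finsetSum (range N) fun r _ ↦
    ((tendsto_jacobiTheta₂_comap_im_atTop ((r + s) / N)).comp hscaled).const_mul (h r)).const_mul
      (1 / N : ℂ)
  simp only [mul_one] at hlim
  refine hlim.congr' ?_
  filter_upwards [hτ.eventually_gt_atTop 0] with x hx
  have him := im_neg_one_div_pos_iff.mp hx
  have hτ₀ : τ x ≠ 0 := ne_ofReal_of_im_pos him 0
  have hsqrt : (-I * τ x) ^ (1 / 2 : ℂ) ≠ 0 := by simp [cpow_eq_zero_iff, hτ₀]
  have hexp : cexp (-π * I * (s * τ x) ^ 2 / τ x) = (cexp (π * I * s ^ 2 * τ x))⁻¹ := by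
    rw [← exp_neg]
    congr 1
    field_simp
  have hcancel : (-I * τ x) ^ (1 / 2 : ℂ) * cexp (π * I * s ^ 2 * τ x) *
      (1 / (-I * τ x) ^ (1 / 2 : ℂ) * (cexp (π * I * s ^ 2 * τ x))⁻¹) = 1 := by
    rw [mul_mul_mul_comm, mul_one_div_cancel hsqrt, mul_inv_cancel₀ (exp_ne_zero _), one_mul]
  rw [tsum_periodic_mul_jacobiTheta₂_term hper _ him, hexp, mul_div_cancel_right₀ s hτ₀,
    ← mul_assoc, hcancel, one_mul]
  rfl

/-- The summand `exp(πi(an² + bn)/c)` of a generalized quadratic Gauss sum. -/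
noncomputable def quadraticPhase (a b c n : ℤ) : ℂ :=
  cexp (π * I / c * (a * n ^ 2 + b * n))

/-- The generalized quadratic Gauss sum `∑ exp(πi(an² + bn)/c)` over `0 ≤ n < |c|`. Its summand is
`c`-periodic in `n` exactly when `ac + b` is even. -/
noncomputable def quadraticGaussSum (a b c : ℤ) : ℂ :=
  ∑ n ∈ range c.natAbs, quadraticPhase a b c n

lemma quadraticPhase_periodic {a b c : ℤ} (hc : c ≠ 0) (hpar : 2 ∣ a * c + b) :
    Function.Periodic (quadraticPhase a b c) c.natAbs := by
  have hperiod : Function.Periodic (quadraticPhase a b c) c := fun n ↦ by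
    obtain ⟨k, hk⟩ := hpar
    have hk' : (a * c + b : ℂ) = 2 * k := mod_cast hk
    have hc' : (c : ℂ) ≠ 0 := mod_cast hc
    refine exp_eq_exp_iff_exists_int.mpr ⟨a * n + k, ?_⟩
    push_cast
    field_simp
    linear_combination (c : ℂ) * hk'
  rcases c.natAbs_eq with hpos | hneg
  · rwa [← hpos]
  · rw [show (c.natAbs : ℤ) = -c by lia]
    exact hperiod.neg

lemma jacobiTheta₂_term_add_rat (a b c n : ℤ) (z τ : ℂ) :
    jacobiTheta₂_term n (z + b / (2 * c)) (τ + a / c) =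
      quadraticPhase a b c n * jacobiTheta₂_term n z τ := by
  simp only [jacobiTheta₂_term, quadraticPhase, ← exp_add]
  congr 1
  ring

lemma tendsto_jacobiTheta₂_rat_cusp {a b c : ℤ} (hc : c ≠ 0) (hpar : 2 ∣ a * c + b) (s : ℂ)
    {α : Type*} {l : Filter α} {τ : α → ℂ} (hτ : Tendsto (fun x ↦ (-1 / τ x).im) l atTop) :
    Tendsto (fun x ↦ (-I * τ x) ^ (1 / 2 : ℂ) * cexp (π * I * s ^ 2 * τ x) *
      jacobiTheta₂ (s * τ x + b / (2 * c)) (τ x + a / c)) l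
      (𝓝 (1 / |(c : ℝ)| * quadraticGaussSum a b c)) := by
  have : NeZero c.natAbs := ⟨Int.natAbs_ne_zero.mpr hc⟩
  have hcard : ((|(c : ℝ)| : ℝ) : ℂ) = c.natAbs := by
    rw [← Int.cast_abs, ← Nat.cast_natAbs, ofReal_natCast]
  simp_rw [jacobiTheta₂, jacobiTheta₂_term_add_rat, hcard]
  exact tendsto_tsum_periodic_mul_jacobiTheta₂_term (quadraticPhase_periodic hc hpar) s hτ

/-- The Möbius map `τ ↦ -1/(τ - k) - 1/k` of the upper half-plane, fixing `0`. It recentres at `0`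
the image under inversion of a neighbourhood of the cusp `-k`. -/
noncomputable def recentredInversion (k : ℝ) (τ : ℂ) : ℂ := -1 / (τ - k) - 1 / k

section recentredInversion

variable {k : ℝ} {τ : ℂ}

lemma recentredInversion_im_pos (k : ℝ) (hτ : 0 < τ.im) : 0 < (recentredInversion k τ).im := by
  have him : 0 < (-1 / (τ - k)).im := im_neg_one_div_pos_iff.mpr (by simpa using hτ)
  rwa [recentredInversion, sub_im, ← ofReal_one, ← ofReal_div, ofReal_im, sub_zero, ofReal_one]

lemma neg_I_mul_sub_mul_recentredInversion (hk : k ≠ 0) (hτ : 0 < τ.im) :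
    (-I * (τ - k)) * (-I * recentredInversion k τ) = (-I * τ) * (I * (1 / k : ℝ)) := by
  have hk' : (k : ℂ) ≠ 0 := mod_cast hk
  have hτk : τ - k ≠ 0 := sub_ne_zero.mpr (ne_ofReal_of_im_pos hτ k)
  rw [recentredInversion]
  push_cast
  field_simp
  ring

lemma neg_one_div_recentredInversion_im (hk : k ≠ 0) (hτ : 0 < τ.im) :
    (-1 / recentredInversion k τ).im = k ^ 2 * (-1 / τ).im := by
  have hk' : (k : ℂ) ≠ 0 := mod_cast hk
  have hτ₀ : τ ≠ 0 := ne_ofReal_of_im_pos hτ 0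
  have hinv : -1 / recentredInversion k τ = k + (k ^ 2 : ℝ) * (-1 / τ) := by
    have hτk : τ - k ≠ 0 := sub_ne_zero.mpr (ne_ofReal_of_im_pos hτ k)
    have hform : recentredInversion k τ = -τ / (k * (τ - k)) := by
      rw [recentredInversion]
      field_simp
      ring
    rw [hform]
    push_cast
    field_simp
    ring
  rw [hinv, add_im, ofReal_im, zero_add, im_ofReal_mul]

-- Both sides are the principal square root of `τ / k`.
lemma cpow_half_mul_cpow_half_recentredInversion (hk : k ≠ 0) (hτ : 0 < τ.im) :
    (-I * (τ - k)) ^ (1 / 2 : ℂ) * (-I * recentredInversion k τ) ^ (1 / 2 : ℂ) =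
      (-I * τ) ^ (1 / 2 : ℂ) * (I * (1 / k : ℝ)) ^ (1 / 2 : ℂ) := by
  have him := recentredInversion_im_pos k hτ
  have hne : -I * recentredInversion k τ ≠ 0 :=
    mul_ne_zero (by simp) (ne_ofReal_of_im_pos him 0)
  have hne' : I * (1 / k : ℝ) ≠ 0 := by simpa using hk
  rw [← mul_cpow_of_re_pos_of_re_nonneg (by simpa using hτ) (by simpa using him.le) hne,
    ← mul_cpow_of_re_pos_of_re_nonneg (by simpa using hτ) (by simp) hne',
    neg_I_mul_sub_mul_recentredInversion hk hτ]

lemma jacobiTheta₂_neg_sub (k : ℝ) (s τ : ℂ) :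
    jacobiTheta₂ (-s) (τ - k) =
      1 / (-I * (τ - k)) ^ (1 / 2 : ℂ) * cexp (π * I * s ^ 2 / k) *
        (cexp (π * I * s ^ 2 * recentredInversion k τ) *
          jacobiTheta₂ (s * recentredInversion k τ + s / k) (recentredInversion k τ + 1 / k)) := by
  have hexp : cexp (-π * I * (-s) ^ 2 / (τ - k)) =
      cexp (π * I * s ^ 2 / k) * cexp (π * I * s ^ 2 * recentredInversion k τ) := by
    rw [recentredInversion, ← exp_add]
    congr 1
    ring
  have hfst : -s / (τ - k) = s * recentredInversion k τ + s / k := by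
    rw [recentredInversion]
    ring
  have hsnd : -1 / (τ - k) = recentredInversion k τ + 1 / k := (sub_add_cancel _ _).symm
  rw [jacobiTheta₂_functional_equation, hexp, hfst, hsnd]
  ring

lemma cpow_half_mul_jacobiTheta₂_neg_sub (hk : k ≠ 0) (hτ : 0 < τ.im) (s : ℂ) :
    (-I * τ) ^ (1 / 2 : ℂ) * jacobiTheta₂ (-s) (τ - k) =
      1 / (I * (1 / k : ℝ)) ^ (1 / 2 : ℂ) * cexp (π * I * s ^ 2 / k) *
        ((-I * recentredInversion k τ) ^ (1 / 2 : ℂ) *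
          cexp (π * I * s ^ 2 * recentredInversion k τ) *
          jacobiTheta₂ (s * recentredInversion k τ + s / k) (recentredInversion k τ + 1 / k)) := by
  have hτk : (-I * (τ - k)) ^ (1 / 2 : ℂ) ≠ 0 := by
    simp [cpow_eq_zero_iff, sub_ne_zero.mpr (ne_ofReal_of_im_pos hτ k)]
  have hIk : (I * (1 / k : ℝ)) ^ (1 / 2 : ℂ) ≠ 0 := by simp [cpow_eq_zero_iff, hk]
  have hsqrt : (-I * τ) ^ (1 / 2 : ℂ) * (1 / (-I * (τ - k)) ^ (1 / 2 : ℂ)) =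
      1 / (I * (1 / k : ℝ)) ^ (1 / 2 : ℂ) * (-I * recentredInversion k τ) ^ (1 / 2 : ℂ) := by
    rw [mul_one_div, one_div_mul_eq_div, div_eq_div_iff hτk hIk,
      ← cpow_half_mul_cpow_half_recentredInversion hk hτ, mul_comm]
  rw [jacobiTheta₂_neg_sub, ← mul_assoc, ← mul_assoc, ← mul_assoc, hsqrt]
  ring

end recentredInversion

lemma cpow_half_mul_jacobiTheta₂_rat {a c : ℤ} (ha : a ≠ 0) (hc : c ≠ 0) (b : ℤ) {τ : ℂ}
    (hτ : 0 < τ.im) :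
    (-I * τ) ^ (1 / 2 : ℂ) * jacobiTheta₂ (-b / (2 * c)) (τ + -a / c) =
      1 / (I * (c / a : ℝ)) ^ (1 / 2 : ℂ) * cexp (π * I * b ^ 2 / (4 * a * c)) *
        ((-I * recentredInversion (a / c) τ) ^ (1 / 2 : ℂ) *
          cexp (π * I * (b / (2 * c)) ^ 2 * recentredInversion (a / c) τ) *
          jacobiTheta₂ (b / (2 * c) * recentredInversion (a / c) τ + b / (2 * a))
            (recentredInversion (a / c) τ + c / a)) := by
  have ha' : (a : ℂ) ≠ 0 := mod_cast ha
  have hc' : (c : ℂ) ≠ 0 := mod_cast hc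
  have htheta := cpow_half_mul_jacobiTheta₂_neg_sub
    (div_ne_zero (mod_cast ha) (mod_cast hc) : (a / c : ℝ) ≠ 0) hτ (b / (2 * c))
  have hexp : (π * I * (b / (2 * c)) ^ 2 / (a / c : ℝ) : ℂ) = π * I * b ^ 2 / (4 * a * c) := by
    push_cast
    field_simp
    norm_num
  have hfst : (b / (2 * c) / (a / c : ℝ) : ℂ) = b / (2 * a) := by
    push_cast
    field_simp
  have hsnd : (1 / (a / c : ℝ) : ℂ) = c / a := by
    push_cast
    rw [one_div_div]
  rw [hexp, hfst, hsnd, one_div_div] at htheta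
  simpa [sub_eq_add_neg, neg_div] using htheta

lemma mean_quadraticPhase_reciprocity {a b c : ℤ} (ha : a ≠ 0) (hc : c ≠ 0)
    (hpar : 2 ∣ a * c + b) :
    1 / |(c : ℝ)| * quadraticGaussSum (-a) (-b) c =
      1 / (I * (c / a : ℝ)) ^ (1 / 2 : ℂ) * cexp (π * I * b ^ 2 / (4 * a * c)) *
        (1 / |(a : ℝ)| * quadraticGaussSum c b a) := by
  have hk : (a / c : ℝ) ≠ 0 := div_ne_zero (mod_cast ha) (mod_cast hc)
  have hτ : Tendsto (fun t : ℝ ↦ (-1 / (I / t)).im) atTop atTop :=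
    tendsto_id.congr fun t ↦ by simp [div_div_eq_mul_div, neg_div]
  have hτ_pos : ∀ᶠ t : ℝ in atTop, 0 < (I / t).im :=
    (hτ.eventually_gt_atTop 0).mono fun t ↦ im_neg_one_div_pos_iff.mp
  have hτ' : Tendsto (fun t : ℝ ↦ (-1 / recentredInversion (a / c) (I / t)).im) atTop atTop := by
    refine (hτ.const_mul_atTop (by positivity : 0 < (a / c : ℝ) ^ 2)).congr' ?_
    filter_upwards [hτ_pos] with t ht using (neg_one_div_recentredInversion_im hk ht).symm
  have hpar_neg : 2 ∣ -a * c + -b := by rwa [neg_mul, ← neg_add, dvd_neg]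
  have hleft := tendsto_jacobiTheta₂_rat_cusp hc hpar_neg 0 hτ
  have hright := tendsto_jacobiTheta₂_rat_cusp ha (by rwa [mul_comm]) (b / (2 * c)) hτ'
  refine tendsto_nhds_unique hleft ((hright.const_mul _).congr' ?_)
  filter_upwards [hτ_pos] with t ht
  rw [← cpow_half_mul_jacobiTheta₂_rat ha hc b ht]
  simp

lemma quadraticGaussSum_reciprocity {a b c : ℤ} (ha : a ≠ 0) (hc : c ≠ 0)
    (hpar : 2 ∣ a * c + b) :
    quadraticGaussSum (-a) (-b) c =
      √|(c / a : ℝ)| * cexp (-(π * I / (4 * a * c)) * ((|a * c| : ℤ) - b ^ 2)) *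
        quadraticGaussSum c b a := by
  have hx : (c / a : ℝ) ≠ 0 := div_ne_zero (mod_cast hc) (mod_cast ha)
  have hc_abs : ((|(c : ℝ)| : ℝ) : ℂ) ≠ 0 := by simpa using hc
  have hexp : cexp (-(π * I / (4 * a * c)) * ((|a * c| : ℤ) - b ^ 2)) =
      cexp (-(π * I / 4) * (|(c / a : ℝ)| / (c / a) : ℝ)) *
        cexp (π * I * b ^ 2 / (4 * a * c)) := by
    rw [abs_div_div_div_eq_abs_mul_div_mul, ← Int.cast_mul, ← Int.cast_abs, ofReal_div,
      ofReal_intCast, ofReal_intCast, Int.cast_mul, ← exp_add]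
    congr 1
    ring
  calc quadraticGaussSum (-a) (-b) c
      = |(c : ℝ)| * (1 / |(c : ℝ)| * quadraticGaussSum (-a) (-b) c) := by field_simp
    _ = |(c / a : ℝ)| / (I * (c / a : ℝ)) ^ (1 / 2 : ℂ) * cexp (π * I * b ^ 2 / (4 * a * c)) *
          quadraticGaussSum c b a := by
      rw [mean_quadraticPhase_reciprocity ha hc hpar, abs_div]
      push_cast
      ring
    _ = _ := by rw [abs_div_I_mul_ofReal_cpow_half hx, mul_assoc (√_ : ℂ), ← hexp]

/-- The reciprocity formula for generalized quadratic Gauss sums: for integers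
`a`, `b`, `c` with `a ≠ 0`, `c ≠ 0` and `a*c + b` even,
`Σ_{n=0}^{|c|-1} exp(-(iπ/c)(a n² + b n))
  = √|c/a| · exp(-(iπ/(4ac))(|ac| - b²)) · Σ_{n=0}^{|a|-1} exp((iπ/a)(c n² + b n))`. -/
theorem gauss_sum_reciprocity (a b c : ℤ) (ha : a ≠ 0) (hc : c ≠ 0)
    (hpar : 2 ∣ (a * c + b)) :
    (∑ n ∈ Finset.range c.natAbs,
        Complex.exp (-(Real.pi * Complex.I / (c : ℂ)) *
          ((a : ℂ) * (n : ℂ) ^ 2 + (b : ℂ) * (n : ℂ)))) =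
      (Real.sqrt |(c : ℝ) / (a : ℝ)| : ℂ) *
        Complex.exp (-(Real.pi * Complex.I / (4 * (a : ℂ) * (c : ℂ))) *
          ((|a * c| : ℤ) - (b : ℂ) ^ 2)) *
        (∑ n ∈ Finset.range a.natAbs,
          Complex.exp ((Real.pi * Complex.I / (a : ℂ)) *
            ((c : ℂ) * (n : ℂ) ^ 2 + (b : ℂ) * (n : ℂ)))) := by
  have hleft (n : ℕ) : cexp (-(π * I / c) * (a * n ^ 2 + b * n)) =
      quadraticPhase (-a) (-b) c n := by
    rw [quadraticPhase]
    push_cast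
    congr 1
    ring
  have hright (n : ℕ) : cexp (π * I / a * (c * n ^ 2 + b * n)) = quadraticPhase c b a n := by
    rw [quadraticPhase, Int.cast_natCast]
  simp_rw [hleft, hright]
  exact quadraticGaussSum_reciprocity ha hc hpar
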